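/- arXiv:1512.02876 — 6 statements merged into one kernel-verified Lean document; each statement's English description precedes it below -/
import Mathlib

section
/- Let M ≥ 1, let f₁, …, f_M be continuous complex-valued functions on the unit sphere of ℝ³, let a₁, …, a_M be integers, b₁, …, b_M natural numbers, and let R > 0. Define Φ(x) = Σ_{m=1}^M ‖x‖^{a_m} (log‖x‖)^{b_m} f_m(x/‖x‖) for x ∈ ℝ³ ∖ {0}. Then: (i) the near-zone integral N(B) = ∫_{0<‖x‖≤R} ‖x‖^B Φ(x) dx converges absolutely whenever Re(B) > max_m(−a_m − 3), and B ↦ N(B) extends to a holomorphic function g₋ on ℂ ∖ {−a_m − 3 : 1 ≤ m ≤ M}; (ii) the far-zone integral F(B) = ∫_{‖x‖≥R} ‖x‖^B Φ(x) dx converges absolutely whenever Re(B) < min_m(−a_m − 3), and extends to a holomorphic function g₊ on the same set; (iii) g₋(B) + g₊(B) = 0 for every B ∈ ℂ ∖ {−a_m − 3 : 1 ≤ m ≤ M}. -/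
/-!
In polar coordinates with `t = log ‖x‖`, each term of the multipolar sum contributes the integral
of its angular function over the sphere times the one-dimensional integral of
`t ^ b * exp (s * t)`, where `s = B + a + 3` and the `3` comes from the Jacobian
(`polar_integral`, `zone_integral`). The near zone becomes `t ≤ log R` and the far zone
`t ≥ log R`.

For `s ≠ 0` the integrand has the explicit antiderivative `logPrim b s`, which is holomorphic in `s`
away from `0`, vanishes at `-∞` when `Re s > 0`, and vanishes at `+∞` when `Re s < 0`. Hence the near
integral is `logPrim b s (log R)` and the far integral is `-logPrim b s (log R)`
(`integral_near`, `integral_far`). These closed formulas are the continuations, and they are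
opposite to each other.
-/

open MeasureTheory Set

/-- The multipolar-structured function `Φ(x) = Σ_m ‖x‖^(a m) (log ‖x‖)^(b m) f_m (x/‖x‖)`. -/
noncomputable def multipolarFun (M : ℕ) (f : Fin M → EuclideanSpace ℝ (Fin 3) → ℂ)
    (a : Fin M → ℤ) (b : Fin M → ℕ) (x : EuclideanSpace ℝ (Fin 3)) : ℂ :=
  ∑ m : Fin M, ((‖x‖ ^ (a m) : ℝ) : ℂ) * (Real.log ‖x‖ : ℂ) ^ (b m) * f m (‖x‖⁻¹ • x)

/-! ### The one-dimensional integral -/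

/-- The antiderivative in `t` of `t ^ b * exp (s * t)` produced by repeated integration by parts:
`exp (s * t)` times a polynomial in `t` and `s⁻¹`. It is meaningful only for `s ≠ 0`. -/
noncomputable def logPrim : ℕ → ℂ → ℝ → ℂ
  | 0, s, t => Complex.exp (s * t) / s
  | b + 1, s, t => ((t : ℂ) ^ (b + 1) * Complex.exp (s * t) - (b + 1) * logPrim b s t) / s

lemma hasDerivAt_logPrim (b : ℕ) {s : ℂ} (hs : s ≠ 0) (t : ℝ) :
    HasDerivAt (logPrim b s) ((t : ℂ) ^ b * Complex.exp (s * t)) t := by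
  have hid : HasDerivAt (fun t : ℝ => (t : ℂ)) 1 t := Complex.ofRealCLM.hasDerivAt
  have hexp : HasDerivAt (fun t : ℝ => Complex.exp (s * t)) (Complex.exp (s * t) * (s * 1)) t :=
    (hid.const_mul s).cexp
  induction b with
  | zero =>
    refine HasDerivAt.congr_deriv (hexp.div_const s) ?_
    field_simp
  | succ b ih =>
    refine HasDerivAt.congr_deriv
      ((((hid.pow (b + 1)).mul hexp).sub (ih.const_mul ((b : ℂ) + 1))).div_const s) ?_
    simp only [Pi.pow_apply, Nat.add_sub_cancel]
    push_cast
    field_simp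
    ring

lemma differentiableOn_logPrim (b : ℕ) (t : ℝ) :
    DifferentiableOn ℂ (fun s => logPrim b s t) {s | s ≠ 0} := by
  have hexp : DifferentiableOn ℂ (fun s : ℂ => Complex.exp (s * t)) {s | s ≠ 0} := by fun_prop
  induction b with
  | zero => exact hexp.div differentiableOn_id fun s hs => hs
  | succ b ih =>
    exact ((hexp.const_mul _).sub (ih.const_mul _)).div differentiableOn_id fun s hs => hs

/-- Half of the exponential decay absorbs the power of `t`. -/
lemma pow_mul_exp_isBigO_atTop (b : ℕ) {s : ℂ} (hs : s.re < 0) :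
    (fun t : ℝ => (t : ℂ) ^ b * Complex.exp (s * t)) =O[Filter.atTop]
      fun t => Real.exp (s.re / 2 * t) := by
  have h1 := (isLittleO_pow_exp_pos_mul_atTop b (b := -s.re / 2) (by linarith)).isBigO
  have h2 := h1.mul (Asymptotics.isBigO_refl (fun t => Real.exp (s.re * t)) Filter.atTop)
  refine (Asymptotics.isBigO_of_le (g := fun t : ℝ => t ^ b * Real.exp (s.re * t)) _
    fun t => ?_).trans (h2.congr_right fun t => ?_)
  · simp [Complex.norm_exp]
  · rw [← Real.exp_add]; congr 1; ring

lemma pow_mul_exp_isBigO_atBot (b : ℕ) {s : ℂ} (hs : 0 < s.re) :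
    (fun t : ℝ => (t : ℂ) ^ b * Complex.exp (s * t)) =O[Filter.atBot]
      fun t => Real.exp (s.re / 2 * t) := by
  have h := (pow_mul_exp_isBigO_atTop b (s := -s) (by simpa)).comp_tendsto
    Filter.tendsto_neg_atBot_atTop
  refine (Asymptotics.isBigO_of_le _ fun t => ?_).trans (h.congr_right fun t => ?_)
  · simp
  · simp; ring

lemma tendsto_logPrim_atTop (b : ℕ) {s : ℂ} (hs : s.re < 0) :
    Filter.Tendsto (logPrim b s) Filter.atTop (nhds 0) := by
  have key (b : ℕ) : Filter.Tendsto (fun t : ℝ => (t : ℂ) ^ b * Complex.exp (s * t))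
      Filter.atTop (nhds 0) :=
    (pow_mul_exp_isBigO_atTop b hs).trans_tendsto <| Real.tendsto_exp_atBot.comp <|
      Filter.tendsto_id.const_mul_atTop_of_neg (by linarith)
  induction b with
  | zero => simpa [logPrim] using (key 0).div_const s
  | succ b ih => simpa [logPrim] using ((key (b + 1)).sub (ih.const_mul ((b : ℂ) + 1))).div_const s

lemma tendsto_logPrim_atBot (b : ℕ) {s : ℂ} (hs : 0 < s.re) :
    Filter.Tendsto (logPrim b s) Filter.atBot (nhds 0) := by
  have key (b : ℕ) : Filter.Tendsto (fun t : ℝ => (t : ℂ) ^ b * Complex.exp (s * t))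
      Filter.atBot (nhds 0) :=
    (pow_mul_exp_isBigO_atBot b hs).trans_tendsto <| Real.tendsto_exp_atBot.comp <|
      Filter.tendsto_id.const_mul_atBot (by linarith)
  induction b with
  | zero => simpa [logPrim] using (key 0).div_const s
  | succ b ih => simpa [logPrim] using ((key (b + 1)).sub (ih.const_mul ((b : ℂ) + 1))).div_const s

lemma integral_near (b : ℕ) {s : ℂ} (hs : 0 < s.re) (L : ℝ) :
    IntegrableOn (fun t : ℝ => (t : ℂ) ^ b * Complex.exp (s * t)) (Iic L) ∧
      ∫ t in Iic L, (t : ℂ) ^ b * Complex.exp (s * t) = logPrim b s L := by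
  have hs0 : s ≠ 0 := by rintro rfl; simp at hs
  have hint : IntegrableOn (fun t : ℝ => (t : ℂ) ^ b * Complex.exp (s * t)) (Iic L) := by
    have hc : Continuous (fun t : ℝ => (t : ℂ) ^ b * Complex.exp (s * t)) := by fun_prop
    exact (hc.locallyIntegrable.locallyIntegrableOn _).integrableOn_of_isBigO_atBot
      (pow_mul_exp_isBigO_atBot b hs)
      ⟨Iic 0, Filter.Iic_mem_atBot 0, integrableOn_exp_mul_Iic (by linarith) 0⟩
  refine ⟨hint, ?_⟩
  simpa using integral_Iic_of_hasDerivAt_of_tendsto'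
    (fun t _ => hasDerivAt_logPrim b hs0 t) hint (tendsto_logPrim_atBot b hs)

lemma integral_far (b : ℕ) {s : ℂ} (hs : s.re < 0) (L : ℝ) :
    IntegrableOn (fun t : ℝ => (t : ℂ) ^ b * Complex.exp (s * t)) (Ici L) ∧
      ∫ t in Ici L, (t : ℂ) ^ b * Complex.exp (s * t) = -logPrim b s L := by
  have hs0 : s ≠ 0 := by rintro rfl; simp at hs
  have hint : IntegrableOn (fun t : ℝ => (t : ℂ) ^ b * Complex.exp (s * t)) (Ici L) := by
    have hc : Continuous (fun t : ℝ => (t : ℂ) ^ b * Complex.exp (s * t)) := by fun_prop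
    exact (hc.locallyIntegrable.locallyIntegrableOn _).integrableOn_of_isBigO_atTop
      (pow_mul_exp_isBigO_atTop b hs)
      ⟨Ioi 0, Filter.Ioi_mem_atTop 0, integrableOn_exp_mul_Ioi (by linarith) 0⟩
  refine ⟨hint, ?_⟩
  rw [integral_Ici_eq_integral_Ioi]
  simpa using integral_Ioi_of_hasDerivAt_of_tendsto'
    (fun t _ => hasDerivAt_logPrim b hs0 t) (hint.mono_set Ioi_subset_Ici_self)
    (tendsto_logPrim_atTop b hs)

/-! ### Polar coordinates with logarithmic radius -/

local notation "E3" => EuclideanSpace ℝ (Fin 3)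

/-- The substitution `r = exp t` turns the radial measure `r ^ 2 dr` on `(0, ∞)` into
`exp (3 * t) dt` on the whole line. -/
lemma polar_volumeIoiPow {h : ℝ → ℂ}
    (hh : Integrable (fun t : ℝ => (Real.exp t : ℂ) ^ 3 * h (Real.exp t))) :
    Integrable (fun r : Ioi (0 : ℝ) => h r) (Measure.volumeIoiPow 2) ∧
      ∫ r : Ioi (0 : ℝ), h r ∂(Measure.volumeIoiPow 2)
        = ∫ t : ℝ, (Real.exp t : ℂ) ^ 3 * h (Real.exp t) := by
  have himg : Real.exp '' univ = Ioi 0 := by rw [image_univ, Real.range_exp]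
  have hd : ∀ t ∈ (univ : Set ℝ), HasDerivWithinAt Real.exp (Real.exp t) univ t :=
    fun t _ => (Real.hasDerivAt_exp t).hasDerivWithinAt
  have hcongr : (fun t : ℝ => |Real.exp t| • ((Real.exp t) ^ 2 • h (Real.exp t)))
      = fun t : ℝ => (Real.exp t : ℂ) ^ 3 * h (Real.exp t) := by
    funext t
    rw [abs_of_pos (Real.exp_pos t), smul_smul, Complex.real_smul]
    push_cast
    ring
  have h1 := integrableOn_image_iff_integrableOn_abs_deriv_smul MeasurableSet.univ hd
    Real.exp_injective.injOn (fun r => r ^ 2 • h r)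
  have h2 := integral_image_eq_integral_abs_deriv_smul MeasurableSet.univ hd
    Real.exp_injective.injOn (fun r => r ^ 2 • h r)
  rw [himg, hcongr, integrableOn_univ] at h1
  rw [himg, hcongr, setIntegral_univ] at h2
  have hsm : (fun r : Ioi (0 : ℝ) => (ENNReal.ofReal (r.1 ^ 2)).toReal • h r)
      = fun r : Ioi (0 : ℝ) => r.1 ^ 2 • h r := by
    funext r
    rw [ENNReal.toReal_ofReal (by positivity)]
  constructor
  · rw [Measure.volumeIoiPow, integrable_withDensity_iff_integrable_smul' (by fun_prop)
      (by simp), hsm]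
    exact (integrableOn_iff_comap_subtypeVal measurableSet_Ioi).1 (h1.2 hh)
  · rw [Measure.volumeIoiPow, integral_withDensity_eq_integral_toReal_smul (by fun_prop)
      (by simp), hsm, ← h2]
    exact integral_subtype_comap measurableSet_Ioi fun r => r ^ 2 • h r

/-- Polar coordinates in `ℝ³` with logarithmic radius `t = log ‖x‖`, for a product of a radial and
an angular function. -/
lemma polar_integral {h : ℝ → ℂ} {k : E3 → ℂ}
    (hk : ContinuousOn k (Metric.sphere (0 : E3) 1))
    (hh : Integrable (fun t : ℝ => (Real.exp t : ℂ) ^ 3 * h (Real.exp t))) :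
    Integrable (fun x : E3 => h ‖x‖ * k (‖x‖⁻¹ • x)) ∧
      ∫ x : E3, h ‖x‖ * k (‖x‖⁻¹ • x)
        = (∫ σ, k σ ∂(volume : Measure E3).toSphere)
          * ∫ t : ℝ, (Real.exp t : ℂ) ^ 3 * h (Real.exp t) := by
  obtain ⟨hi, he⟩ := polar_volumeIoiPow hh
  have hkc : Continuous fun σ : Metric.sphere (0 : E3) 1 => k σ :=
    continuousOn_iff_continuous_domRestrict.1 hk
  have hki : Integrable (fun σ : Metric.sphere (0 : E3) 1 => k σ)
      (volume : Measure E3).toSphere :=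
    hkc.integrable_of_hasCompactSupport (HasCompactSupport.of_compactSpace _)
  have hmp := (volume : Measure E3).measurePreserving_homeomorphUnitSphereProd
  rw [finrank_euclideanSpace_fin] at hmp
  have hemb := (homeomorphUnitSphereProd E3).measurableEmbedding
  have hcomp : (fun p : Metric.sphere (0 : E3) 1 × Ioi (0 : ℝ) => k p.1 * h p.2)
      ∘ homeomorphUnitSphereProd E3 = fun x => h ‖x.1‖ * k (‖x.1‖⁻¹ • x.1) := by
    funext x
    simp [mul_comm]
  have hm : MeasurableSet ({0}ᶜ : Set E3) := (measurableSet_singleton _).compl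
  constructor
  · rw [← restrict_compl_singleton (μ := (volume : Measure E3)) 0, ← IntegrableOn,
      integrableOn_iff_comap_subtypeVal hm]
    have := (hmp.integrable_comp_emb hemb).2 (hki.mul_prod hi)
    rwa [hcomp] at this
  · rw [← he, ← integral_prod_mul, ← hmp.integral_comp hemb]
    have h3 := integral_subtype_comap (μ := (volume : Measure E3)) hm
      fun x => h ‖x‖ * k (‖x‖⁻¹ • x)
    rw [restrict_compl_singleton] at h3
    rw [← h3]
    exact congrArg (fun F => ∫ x, F x ∂_) hcomp.symm

/-! ### Zone integrals of multipolar functions -/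

/-- Contribution of a single multipolar term to the integral over `{x | ‖x‖ ∈ S}`. The factors
`‖x‖ ^ B`, `‖x‖ ^ a` and the Jacobian `exp (3 * t)` combine into `exp ((B + a + 3) * t)`. -/
lemma zone_integral_term {S : Set ℝ} (hS : MeasurableSet S) {k : E3 → ℂ}
    (hk : ContinuousOn k (Metric.sphere (0 : E3) 1)) (a : ℤ) (b : ℕ) (B : ℂ)
    (hint : IntegrableOn (fun t : ℝ => (t : ℂ) ^ b * Complex.exp ((B + a + 3) * t))
      (Real.exp ⁻¹' S)) :
    IntegrableOn (fun x : E3 => Complex.exp (B * (Real.log ‖x‖ : ℂ)) *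
        (((‖x‖ ^ a : ℝ) : ℂ) * (Real.log ‖x‖ : ℂ) ^ b * k (‖x‖⁻¹ • x))) {x | ‖x‖ ∈ S} ∧
      ∫ x : E3 in {x | ‖x‖ ∈ S}, Complex.exp (B * (Real.log ‖x‖ : ℂ)) *
          (((‖x‖ ^ a : ℝ) : ℂ) * (Real.log ‖x‖ : ℂ) ^ b * k (‖x‖⁻¹ • x))
        = (∫ σ, k σ ∂(volume : Measure E3).toSphere)
          * ∫ t in Real.exp ⁻¹' S, (t : ℂ) ^ b * Complex.exp ((B + a + 3) * t) := by
  have hS' : MeasurableSet (Real.exp ⁻¹' S) := Real.measurable_exp hS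
  have hSx : MeasurableSet {x : E3 | ‖x‖ ∈ S} := measurable_norm hS
  let h : ℝ → ℂ := S.indicator fun r =>
    Complex.exp (B * (Real.log r : ℂ)) * (((r ^ a : ℝ) : ℂ) * (Real.log r : ℂ) ^ b)
  have hlog : (fun t : ℝ => (Real.exp t : ℂ) ^ 3 * h (Real.exp t))
      = (Real.exp ⁻¹' S).indicator
        fun t : ℝ => (t : ℂ) ^ b * Complex.exp ((B + a + 3) * t) := by
    funext t
    by_cases ht : Real.exp t ∈ S
    · have e1 : ((Real.exp t ^ a : ℝ) : ℂ) = Complex.exp (a * t) := by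
        rw [Complex.ofReal_zpow, Complex.ofReal_exp, ← Complex.exp_int_mul]
      have e2 : (Real.exp t : ℂ) ^ 3 = Complex.exp (3 * t) := by
        rw [Complex.ofReal_exp, ← Complex.exp_nat_mul]; norm_num
      rw [indicator_of_mem (show t ∈ Real.exp ⁻¹' S from ht)]
      simp only [h, indicator_of_mem ht, Real.log_exp]
      rw [e1, e2, add_mul, add_mul, Complex.exp_add, Complex.exp_add]
      ring
    · rw [indicator_of_notMem (show t ∉ Real.exp ⁻¹' S from ht)]
      simp [h, indicator_of_notMem ht]
  have hspace : (fun x : E3 => h ‖x‖ * k (‖x‖⁻¹ • x))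
      = {x : E3 | ‖x‖ ∈ S}.indicator fun x => Complex.exp (B * (Real.log ‖x‖ : ℂ)) *
        (((‖x‖ ^ a : ℝ) : ℂ) * (Real.log ‖x‖ : ℂ) ^ b * k (‖x‖⁻¹ • x)) := by
    funext x
    by_cases hx : ‖x‖ ∈ S
    · rw [indicator_of_mem (show x ∈ {x : E3 | ‖x‖ ∈ S} from hx)]
      simp only [h, indicator_of_mem hx]
      ring
    · rw [indicator_of_notMem (show x ∉ {x : E3 | ‖x‖ ∈ S} from hx)]
      simp [h, indicator_of_notMem hx]
  have hp := polar_integral (h := h) hk (by rw [hlog, integrable_indicator_iff hS']; exact hint)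
  rwa [hlog, hspace, integrable_indicator_iff hSx, integral_indicator hSx,
    integral_indicator hS'] at hp

lemma zone_integral {M : ℕ} {f : Fin M → E3 → ℂ}
    (hf : ∀ m, ContinuousOn (f m) (Metric.sphere (0 : E3) 1))
    (a : Fin M → ℤ) (b : Fin M → ℕ) {S : Set ℝ} (hS : MeasurableSet S) (B : ℂ)
    (hint : ∀ m, IntegrableOn
      (fun t : ℝ => (t : ℂ) ^ b m * Complex.exp ((B + a m + 3) * t)) (Real.exp ⁻¹' S)) :
    IntegrableOn (fun x => Complex.exp (B * (Real.log ‖x‖ : ℂ)) * multipolarFun M f a b x)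
        {x : E3 | ‖x‖ ∈ S} ∧
      ∫ x in {x : E3 | ‖x‖ ∈ S},
          Complex.exp (B * (Real.log ‖x‖ : ℂ)) * multipolarFun M f a b x
        = ∑ m, (∫ σ, f m σ ∂(volume : Measure E3).toSphere)
          * ∫ t in Real.exp ⁻¹' S, (t : ℂ) ^ b m * Complex.exp ((B + a m + 3) * t) := by
  have ht m := zone_integral_term hS (hf m) (a m) (b m) B (hint m)
  simp only [multipolarFun, Finset.mul_sum]
  refine ⟨integrable_finsetSum _ fun m _ => (ht m).1, ?_⟩
  rw [integral_finsetSum _ fun m _ => (ht m).1]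
  exact Finset.sum_congr rfl fun m _ => (ht m).2

/-- The near-zone and far-zone `B`-regularized integrals of a multipolar-structured function
converge on the half-planes `Re B > max_m (-a_m - 3)` and `Re B < min_m (-a_m - 3)`
respectively, both extend holomorphically to `ℂ ∖ {-a_m - 3}`, and the two analytic
continuations cancel exactly. -/
theorem near_far_analytic_continuation_cancel
    (M : ℕ) (hM : 1 ≤ M) (f : Fin M → EuclideanSpace ℝ (Fin 3) → ℂ)
    (hf : ∀ m, ContinuousOn (f m) (Metric.sphere (0 : EuclideanSpace ℝ (Fin 3)) 1))
    (a : Fin M → ℤ) (b : Fin M → ℕ) (R : ℝ) (hR : 0 < R) :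
    ∃ gneg gpos : ℂ → ℂ,
      DifferentiableOn ℂ gneg {B : ℂ | ∀ m, B ≠ -(a m : ℂ) - 3} ∧
      DifferentiableOn ℂ gpos {B : ℂ | ∀ m, B ≠ -(a m : ℂ) - 3} ∧
      (∀ B : ℂ, (∀ m, -(a m : ℝ) - 3 < B.re) →
        IntegrableOn
          (fun x => Complex.exp (B * (Real.log ‖x‖ : ℂ)) * multipolarFun M f a b x)
          {x : EuclideanSpace ℝ (Fin 3) | 0 < ‖x‖ ∧ ‖x‖ ≤ R} volume ∧
        ∫ x in {x : EuclideanSpace ℝ (Fin 3) | 0 < ‖x‖ ∧ ‖x‖ ≤ R},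
            Complex.exp (B * (Real.log ‖x‖ : ℂ)) * multipolarFun M f a b x = gneg B) ∧
      (∀ B : ℂ, (∀ m, B.re < -(a m : ℝ) - 3) →
        IntegrableOn
          (fun x => Complex.exp (B * (Real.log ‖x‖ : ℂ)) * multipolarFun M f a b x)
          {x : EuclideanSpace ℝ (Fin 3) | R ≤ ‖x‖} volume ∧
        ∫ x in {x : EuclideanSpace ℝ (Fin 3) | R ≤ ‖x‖},
            Complex.exp (B * (Real.log ‖x‖ : ℂ)) * multipolarFun M f a b x = gpos B) ∧
      (∀ B : ℂ, (∀ m, B ≠ -(a m : ℂ) - 3) → gneg B + gpos B = 0) := by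
  -- The common continuation is the boundary value at `t = log R` of the antiderivatives.
  let g : ℂ → ℂ := fun B => ∑ m, (∫ σ, f m σ ∂(volume : Measure E3).toSphere)
    * logPrim (b m) (B + a m + 3) (Real.log R)
  have hg : DifferentiableOn ℂ g {B : ℂ | ∀ m, B ≠ -(a m : ℂ) - 3} := by
    refine DifferentiableOn.fun_sum fun m _ => DifferentiableOn.const_mul ?_ _
    refine (differentiableOn_logPrim (b m) (Real.log R)).comp
      (f := fun B : ℂ => B + a m + 3) (by fun_prop) fun B hB h0 => hB m ?_
    linear_combination h0
  have hre (B : ℂ) (m : Fin M) : (B + a m + 3).re = B.re + a m + 3 := by simp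
  have hnear : Real.exp ⁻¹' Ioc 0 R = Iic (Real.log R) := by
    ext t
    simp [Real.exp_pos, Real.le_log_iff_exp_le hR]
  have hfar : Real.exp ⁻¹' Ici R = Ici (Real.log R) := by
    ext t
    simp [Real.log_le_iff_le_exp hR]
  refine ⟨g, fun B => -g B, hg, hg.neg, fun B hB => ?_, fun B hB => ?_, fun B _ => add_neg_cancel _⟩
  · have hr m := integral_near (b m) (s := B + a m + 3) (by rw [hre]; linarith [hB m])
      (Real.log R)
    have hz := zone_integral hf a b (S := Ioc 0 R) measurableSet_Ioc B
      (by rw [hnear]; exact fun m => (hr m).1)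
    refine ⟨hz.1, hz.2.trans ?_⟩
    simp only [hnear, (hr _).2, g]
  · have hr m := integral_far (b m) (s := B + a m + 3) (by rw [hre]; linarith [hB m])
      (Real.log R)
    have hz := zone_integral hf a b (S := Ici R) measurableSet_Ici B
      (by rw [hfar]; exact fun m => (hr m).1)
    refine ⟨hz.1, hz.2.trans ?_⟩
    simp only [hfar, (hr _).2, g, mul_neg, Finset.sum_neg_distrib]
end

section
/- Let f : ℝ → ℝ be smooth with compact support, let τ₀ > 0 and t ∈ ℝ. Then the limit lim_{η→0⁺} [ ∫_η^∞ (f(t−τ) + f(t+τ))/τ dτ + 2 f(t) log(η/τ₀) ] exists and equals ∫₀^∞ log(τ/τ₀) (f′(t−τ) − f′(t+τ)) dτ. -/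
/-!
The two one-sided halves of the integral are folded into `g τ = f (t - τ) + f (t + τ)`, which is
`C¹` with compact support, with `g 0 = 2 f t` and `g' τ = -(f' (t - τ) - f' (t + τ))`. Integration
by parts on `(η, ∞)` gives
`∫_η^∞ g τ / τ dτ + g 0 log (η/τ₀) = -∫_η^∞ log (τ/τ₀) g' τ dτ - (g η - g 0) log (η/τ₀)`.
As `η → 0⁺`, the integral on the right converges to the one over `(0, ∞)` because `log` is locally
integrable and `g'` is continuous with compact support, while the boundary term vanishes because
`g η - g 0 = O(η)` and `η log η → 0`.
-/

open MeasureTheory Set Filter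

lemma integrable_log_div_mul (τ₀ : ℝ) (hτ₀ : 0 < τ₀) (h : ℝ → ℝ) (hc : Continuous h)
    (hs : HasCompactSupport h) : Integrable (fun τ => Real.log (τ / τ₀) * h τ) := by
  have hlog : LocallyIntegrable Real.log := by
    intro x
    refine ⟨Icc (x - 1) (x + 1), Icc_mem_nhds (by linarith) (by linarith), ?_⟩
    exact (intervalIntegrable_iff_integrableOn_Icc_of_le (by linarith)).1
      intervalIntegral.intervalIntegrable_log'
  have h1 : Integrable (fun τ => Real.log τ * h τ) := by
    simpa [mul_comm] using hlog.integrable_smul_left_of_hasCompactSupport hc hs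
  have h2 : Integrable (fun τ => Real.log τ₀ * h τ) :=
    (hc.integrable_of_hasCompactSupport hs).const_mul _
  refine (h1.sub h2).congr ?_
  -- `log (τ / τ₀) = log τ - log τ₀` fails at `τ = 0`, a null set.
  filter_upwards [Measure.ae_ne volume (0 : ℝ)] with τ hτ
  simp only [Pi.sub_apply]
  rw [Real.log_div hτ hτ₀.ne']
  ring

lemma cutoff_integral_by_parts (τ₀ : ℝ) (hτ₀ : 0 < τ₀) (g g' : ℝ → ℝ)
    (hg : ∀ x, HasDerivAt g (g' x) x) (hc' : Continuous g')
    (hs : HasCompactSupport g) (hs' : HasCompactSupport g') (η : ℝ) (hη : 0 < η) :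
    ∫ τ in Ioi η, Real.log (τ / τ₀) * g' τ
      = 0 - Real.log (η / τ₀) * g η - ∫ τ in Ioi η, τ⁻¹ * g τ := by
  have hc : Continuous g := continuous_iff_continuousAt.2 fun x => (hg x).continuousAt
  refine integral_Ioi_mul_deriv_eq_deriv_mul (u := fun τ => Real.log (τ / τ₀)) ?_
    (fun x _ => hg x) (integrable_log_div_mul τ₀ hτ₀ g' hc' hs').integrableOn ?_ ?_ ?_
  · intro x hx
    have hx0 : x ≠ 0 := (hη.trans hx).ne'
    have h := ((hasDerivAt_id' x).div_const τ₀).log (div_ne_zero hx0 hτ₀.ne')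
    have he : 1 / τ₀ / (x / τ₀) = x⁻¹ := by field_simp
    rwa [he] at h
  · refine Integrable.bdd_mul (c := η⁻¹) (hc.integrable_of_hasCompactSupport hs).integrableOn
      measurable_inv.aestronglyMeasurable ?_
    filter_upwards [ae_restrict_mem measurableSet_Ioi] with x hx
    have hx : η < x := hx
    rw [Real.norm_eq_abs, abs_of_pos (inv_pos.2 (hη.trans hx))]
    exact inv_anti₀ hη hx.le
  · refine (ContinuousAt.mul (ContinuousAt.log (by fun_prop) ?_) hc.continuousAt).mono_left
      nhdsWithin_le_nhds
    exact (div_pos hη hτ₀).ne'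
  · refine tendsto_const_nhds.congr' ?_
    have h0 : g =ᶠ[atTop] 0 :=
      (hasCompactSupport_iff_eventuallyEq.1 hs).filter_mono
        (coclosedCompact_eq_cocompact (X := ℝ) ▸ atTop_le_cocompact)
    filter_upwards [h0] with x hx
    simp [hx]

lemma tendsto_boundary_term (τ₀ : ℝ) (hτ₀ : 0 < τ₀) (g : ℝ → ℝ) (a : ℝ) (hg : HasDerivAt g a 0) :
    Tendsto (fun η => (g η - g 0) * Real.log (η / τ₀)) (nhdsWithin 0 (Ioi 0)) (nhds 0) := by
  have h1 : (fun η => g η - g 0) =O[nhdsWithin 0 (Ioi 0)] fun η => η := by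
    simpa using hg.isBigO_sub.mono (nhdsWithin_le_nhds (s := Ioi (0 : ℝ)))
  have h2 : Tendsto (fun η : ℝ => η * Real.log (η / τ₀)) (nhdsWithin 0 (Ioi 0)) (nhds 0) := by
    have h3 : Tendsto (fun η : ℝ => Real.log η * η) (nhdsWithin 0 (Ioi 0)) (nhds 0) := by
      simpa using tendsto_log_mul_rpow_nhdsGT_zero zero_lt_one
    have h4 : Tendsto (fun η : ℝ => Real.log τ₀ * η) (nhdsWithin 0 (Ioi 0)) (nhds 0) := by
      have : Continuous fun η : ℝ => Real.log τ₀ * η := by fun_prop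
      simpa using (this.tendsto 0).mono_left nhdsWithin_le_nhds
    have h5 := h3.sub h4
    rw [sub_zero] at h5
    refine h5.congr' ?_
    filter_upwards [self_mem_nhdsWithin] with η hη
    have hη : 0 < η := hη
    rw [Real.log_div hη.ne' hτ₀.ne']
    ring
  exact (h1.mul (Asymptotics.isBigO_refl _ _)).trans_tendsto h2

lemma tendsto_setIntegral_Ioi_zero (F : ℝ → ℝ) (hF : Integrable F) :
    Tendsto (fun η => ∫ τ in Ioi η, F τ) (nhdsWithin 0 (Ioi 0)) (nhds (∫ τ in Ioi 0, F τ)) := by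
  have hcont : Continuous fun η => ∫ τ in (0 : ℝ)..η, F τ :=
    intervalIntegral.continuous_primitive (fun _ _ => hF.intervalIntegrable) 0
  have h : Tendsto (fun η => (∫ τ in Ioi 0, F τ) - ∫ τ in (0 : ℝ)..η, F τ)
      (nhdsWithin 0 (Ioi 0)) (nhds (∫ τ in Ioi 0, F τ)) := by
    simpa using ((hcont.tendsto 0).const_sub (∫ τ in Ioi 0, F τ)).mono_left nhdsWithin_le_nhds
  refine h.congr fun η => ?_
  rw [← intervalIntegral.integral_Ioi_sub_Ioi' hF.integrableOn hF.integrableOn]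
  ring

/-- The cutoff (subtracted-limit) definition of the Hadamard partie finie of
`∫ f(t')/|t-t'| dt'` agrees with the log-kernel definition
`∫₀^∞ log(τ/τ₀) (f'(t-τ) - f'(t+τ)) dτ`. -/
theorem hadamard_partie_finie_cutoff_eq_log_kernel
    (f : ℝ → ℝ) (hf : ContDiff ℝ (⊤ : ℕ∞) f) (hsupp : HasCompactSupport f)
    (τ₀ : ℝ) (hτ₀ : 0 < τ₀) (t : ℝ) :
    Tendsto
      (fun η : ℝ =>
        (∫ τ in Ioi η, (f (t - τ) + f (t + τ)) / τ) + 2 * f t * Real.log (η / τ₀))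
      (nhdsWithin 0 (Ioi 0))
      (nhds (∫ τ in Ioi (0 : ℝ),
        Real.log (τ / τ₀) * (deriv f (t - τ) - deriv f (t + τ)))) := by
  have hfold : ∀ k : ℝ → ℝ, HasCompactSupport k →
      HasCompactSupport (fun τ => k (t - τ)) ∧ HasCompactSupport (fun τ => k (t + τ)) :=
    fun k hk => ⟨hk.comp_homeomorph (Homeomorph.subLeft t),
      hk.comp_homeomorph (Homeomorph.addLeft t)⟩
  have hd : ∀ x, HasDerivAt f (deriv f x) x := fun x =>
    (hf.differentiable (by simp) x).hasDerivAt
  have hcd : Continuous (deriv f) := hf.continuous_deriv (by simp)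
  set g : ℝ → ℝ := fun τ => f (t - τ) + f (t + τ) with hgdef
  set g' : ℝ → ℝ := fun τ => -deriv f (t - τ) + deriv f (t + τ) with hg'def
  have hg : ∀ x, HasDerivAt g (g' x) x := fun x =>
    ((hd (t - x)).comp_const_sub t x).add ((hd (t + x)).comp_const_add t x)
  have hc' : Continuous g' := by fun_prop
  have hs : HasCompactSupport g := (hfold f hsupp).1.add (hfold f hsupp).2
  have hs' : HasCompactSupport g' :=
    (hfold _ hsupp.deriv).1.neg.add (hfold _ hsupp.deriv).2
  have hF := integrable_log_div_mul τ₀ hτ₀ g' hc' hs'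
  have hlim := (tendsto_setIntegral_Ioi_zero _ hF).neg.sub
    (tendsto_boundary_term τ₀ hτ₀ g (g' 0) (hg 0))
  have hval : ∫ τ in Ioi (0 : ℝ), Real.log (τ / τ₀) * (deriv f (t - τ) - deriv f (t + τ))
      = -(∫ τ in Ioi (0 : ℝ), Real.log (τ / τ₀) * g' τ) - 0 := by
    rw [sub_zero, ← integral_neg]
    congr 1
    ext τ
    simp only [hg'def]
    ring
  rw [hval]
  refine hlim.congr' ?_
  filter_upwards [self_mem_nhdsWithin] with η hη
  rw [cutoff_integral_by_parts τ₀ hτ₀ g g' hg hc' hs hs' η hη]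
  have hg0 : g 0 = 2 * f t := by simp only [hgdef, sub_zero, add_zero]; ring
  have hdiv : ∫ τ in Ioi η, (f (t - τ) + f (t + τ)) / τ = ∫ τ in Ioi η, τ⁻¹ * g τ := by
    simp only [hgdef, div_eq_inv_mul]
  rw [hdiv, hg0]
  ring
end

section
/- Let f : ℝ → ℝ be smooth with compact support and τ₀ > 0. Then ∫_ℝ ∫₀^∞ f(t) log(τ/τ₀) (f⁽⁷⁾(t−τ) + f⁽⁷⁾(t+τ)) dτ dt = 0; equivalently, the retarded-only tail double integral equals its time-symmetrized form: ∫_ℝ f(t) ∫₀^∞ log(τ/τ₀) f⁽⁷⁾(t−τ) dτ dt = (1/2) ∫_ℝ f(t) ∫₀^∞ log(τ/τ₀) (f⁽⁷⁾(t−τ) − f⁽⁷⁾(t+τ)) dτ dt. -/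
open MeasureTheory Set

/-!
Write `g` for the seventh derivative of `f`. For fixed `τ`, translating `t` and integrating by
parts seven times gives `∫ f(t) g(t + τ) dt = ∫ f(t - τ) g(t) dt = -∫ f(t) g(t - τ) dt`, because
seven is odd; so the symmetric combination integrates to zero in `t` for every `τ`.

The two integrals may be exchanged: if `f` is supported in `[-R, R]`, then the kernel
`f(t) log(τ/τ₀) g(t ± τ)` vanishes unless `|t| ≤ R` and `τ ≤ 2R`, and `log` is integrable on
`(0, 2R]`, so the kernel is integrable on `ℝ × (0, ∞)` (`integrable_tail_kernel`). Both claims are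
then linear identities between integrals over this product.
-/

lemma hasCompactSupport_iteratedDeriv {u : ℝ → ℝ} (hu : HasCompactSupport u) (n : ℕ) :
    HasCompactSupport (iteratedDeriv n u) := by
  induction n with
  | zero => simpa using hu
  | succ n ih => rw [iteratedDeriv_succ]; exact ih.deriv

/-- Repeated integration by parts without boundary terms. -/
lemma integral_mul_iteratedDeriv {u v : ℝ → ℝ} (hu : ContDiff ℝ (⊤ : ℕ∞) u)
    (hv : ContDiff ℝ (⊤ : ℕ∞) v) (hcu : HasCompactSupport u) (n : ℕ) :
    ∫ t, u t * iteratedDeriv n v t = (-1) ^ n * ∫ t, iteratedDeriv n u t * v t := by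
  induction n generalizing u with
  | zero => simp
  | succ n ih =>
    have hu' : ContDiff ℝ (⊤ : ℕ∞) (deriv u) := hu.iterate_deriv 1
    have hdv : ContDiff ℝ (⊤ : ℕ∞) (iteratedDeriv n v) := by
      rw [iteratedDeriv_eq_iterate]; exact hv.iterate_deriv n
    have hdv' : ContDiff ℝ (⊤ : ℕ∞) (deriv (iteratedDeriv n v)) := hdv.iterate_deriv 1
    have key : ∫ t, u t * iteratedDeriv (n + 1) v t = -∫ t, deriv u t * iteratedDeriv n v t := by
      rw [iteratedDeriv_succ]
      refine integral_mul_deriv_eq_deriv_mul_of_integrable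
        (fun x _ => (hu.differentiable (by simp) x).hasDerivAt)
        (fun x _ => (hdv.differentiable (by simp) x).hasDerivAt) ?_ ?_ ?_
      · exact (hu.continuous.mul hdv'.continuous).integrable_of_hasCompactSupport hcu.mul_right
      · exact (hu'.continuous.mul hdv.continuous).integrable_of_hasCompactSupport
          hcu.deriv.mul_right
      · exact (hu.continuous.mul hdv.continuous).integrable_of_hasCompactSupport hcu.mul_right
    rw [key, ih hu' hcu.deriv, iteratedDeriv_succ', pow_succ]
    ring

/-- At fixed `τ` the retarded and advanced correlations with the seventh derivative cancel. -/
lemma integral_retarded_add_advanced {f : ℝ → ℝ} (hf : ContDiff ℝ (⊤ : ℕ∞) f)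
    (hsupp : HasCompactSupport f) (τ : ℝ) :
    ∫ t, f t * iteratedDeriv 7 f (t + τ) = -∫ t, f t * iteratedDeriv 7 f (t - τ) := by
  have h1 : ∫ t, f t * iteratedDeriv 7 f (t + τ) = ∫ t, f (t - τ) * iteratedDeriv 7 f t := by
    rw [← integral_sub_right_eq_self (fun t => f t * iteratedDeriv 7 f (t + τ)) τ]
    simp
  have hs : ContDiff ℝ (⊤ : ℕ∞) (fun t => f (t - τ)) :=
    hf.comp (contDiff_id.sub contDiff_const)
  have hc : HasCompactSupport (fun t => f (t - τ)) := by
    simpa [Function.comp_def] using hsupp.comp_homeomorph (Homeomorph.subRight τ)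
  rw [h1, integral_mul_iteratedDeriv hs hf hc 7, iteratedDeriv_comp_sub_const]
  norm_num
  exact integral_congr_ae (.of_forall fun t => mul_comm _ _)

/-- Absolute integrability of the tail kernel; `s = 1` is the advanced case, `s = -1` the
retarded one. -/
lemma integrable_tail_kernel {f g : ℝ → ℝ} (hf : Continuous f) (hcf : HasCompactSupport f)
    (hg : Continuous g) (hcg : HasCompactSupport g) {τ₀ : ℝ} (hτ₀ : 0 < τ₀)
    {s : ℝ} (hs : |s| = 1) :
    Integrable (fun p : ℝ × ℝ => f p.1 * Real.log (p.2 / τ₀) * g (p.1 + s * p.2))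
      ((volume : Measure ℝ).prod (volume.restrict (Ioi 0))) := by
  obtain ⟨R, hR⟩ : ∃ R, ∀ x, R < |x| → f x = 0 ∧ g x = 0 := by
    obtain ⟨A, hA⟩ := hcf.isCompact.isBounded.exists_norm_le
    obtain ⟨B, hB⟩ := hcg.isCompact.isBounded.exists_norm_le
    refine ⟨max A B, fun x hx => ⟨?_, ?_⟩⟩
    · by_contra h
      exact absurd (hA x (subset_tsupport f h)) (not_le.2 ((le_max_left A B).trans_lt hx))
    · by_contra h
      exact absurd (hB x (subset_tsupport g h)) (not_le.2 ((le_max_right A B).trans_lt hx))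
  obtain ⟨C, hC⟩ := hg.bounded_above_of_compact_support hcg
  have hlog : Integrable ((Ioc 0 (2 * R)).indicator fun τ => Real.log (τ / τ₀))
      (volume.restrict (Ioi 0)) := by
    refine Integrable.restrict ?_
    rw [integrable_indicator_iff measurableSet_Ioc]
    have h : IntegrableOn (fun τ => Real.log τ - Real.log τ₀) (Ioc 0 (2 * R)) := by
      refine Integrable.sub ?_ ?_
      · exact (intervalIntegral.intervalIntegrable_log' (a := 0) (b := 2 * R)).1
      · exact integrableOn_const measure_Ioc_lt_top.ne
    refine h.congr_fun (fun τ hτ => ?_) measurableSet_Ioc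
    exact (Real.log_div hτ.1.ne' hτ₀.ne').symm
  have hf1 : Integrable f := hf.integrable_of_hasCompactSupport hcf
  have hprod := (hf1.mul_prod hlog).mul_bdd (c := C)
    (g := fun p : ℝ × ℝ => g (p.1 + s * p.2))
    (by fun_prop : Continuous fun p : ℝ × ℝ => g (p.1 + s * p.2)).aestronglyMeasurable
    (.of_forall fun p => hC _)
  refine hprod.congr ?_
  have hpos : ∀ᵐ p : ℝ × ℝ ∂((volume : Measure ℝ).prod (volume.restrict (Ioi 0))), 0 < p.2 :=
    Measure.quasiMeasurePreserving_snd.ae (ae_restrict_mem measurableSet_Ioi)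
  filter_upwards [hpos] with p hp
  by_cases hp2 : p.2 ≤ 2 * R
  · rw [indicator_of_mem (show p.2 ∈ Ioc 0 (2 * R) from ⟨hp, hp2⟩)]
  · -- Beyond `2R` the arguments of `f` and `g` cannot both lie in `[-R, R]`.
    rw [indicator_of_notMem (fun h => hp2 h.2)]
    by_cases h1 : R < |p.1|
    · simp [(hR _ h1).1]
    · have h2 : R < |p.1 + s * p.2| := by
        have h3 : |s * p.2| = p.2 := by rw [abs_mul, hs, one_mul, abs_of_pos hp]
        have h4 := abs_sub (p.1 + s * p.2) p.1
        rw [add_sub_cancel_left, h3] at h4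
        linarith
      simp [(hR _ h2).2]

/-- The 4PN tail term in the Fokker action is manifestly time-symmetric: the
time-antisymmetric (advanced-plus-retarded) part integrates to zero, and equivalently
the retarded-only tail double integral equals its time-symmetrized form. -/
theorem tail_action_time_symmetric
    (f : ℝ → ℝ) (hf : ContDiff ℝ (⊤ : ℕ∞) f) (hsupp : HasCompactSupport f)
    (τ₀ : ℝ) (hτ₀ : 0 < τ₀) :
    (∫ t : ℝ, ∫ τ in Ioi (0 : ℝ),
        f t * Real.log (τ / τ₀) *
          (iteratedDeriv 7 f (t - τ) + iteratedDeriv 7 f (t + τ))) = 0 ∧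
    (∫ t : ℝ, f t * ∫ τ in Ioi (0 : ℝ),
        Real.log (τ / τ₀) * iteratedDeriv 7 f (t - τ)) =
      (1 / 2) * ∫ t : ℝ, f t * ∫ τ in Ioi (0 : ℝ),
        Real.log (τ / τ₀) *
          (iteratedDeriv 7 f (t - τ) - iteratedDeriv 7 f (t + τ)) := by
  have hcont : Continuous (iteratedDeriv 7 f) := by
    rw [iteratedDeriv_eq_iterate]; exact (hf.iterate_deriv 7).continuous
  have hcs := hasCompactSupport_iteratedDeriv hsupp 7
  have hadv := integrable_tail_kernel hf.continuous hsupp hcont hcs hτ₀ (s := 1) (by simp)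
  have hret := integrable_tail_kernel hf.continuous hsupp hcont hcs hτ₀ (s := -1) (by simp)
  have hanti : ∀ τ, ∫ t, f t * iteratedDeriv 7 f (t + τ) =
      -∫ t, f t * iteratedDeriv 7 f (t - τ) := integral_retarded_add_advanced hf hsupp
  simp only [one_mul, neg_one_mul, ← sub_eq_add_neg] at hadv hret
  generalize iteratedDeriv 7 f = g at *
  have hswap : ∫ p : ℝ × ℝ, f p.1 * Real.log (p.2 / τ₀) * g (p.1 + p.2)
        ∂((volume : Measure ℝ).prod (volume.restrict (Ioi 0))) =
      -∫ p : ℝ × ℝ, f p.1 * Real.log (p.2 / τ₀) * g (p.1 - p.2)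
        ∂((volume : Measure ℝ).prod (volume.restrict (Ioi 0))) := by
    rw [integral_prod_symm _ hadv, integral_prod_symm _ hret, ← integral_neg]
    congr 1
    ext τ
    have h (w : ℝ → ℝ) : ∫ t, f t * Real.log (τ / τ₀) * w t =
        Real.log (τ / τ₀) * ∫ t, f t * w t := by
      rw [← integral_const_mul]
      congr 1
      ext t
      ring
    rw [h fun t => g (t + τ), h fun t => g (t - τ), hanti τ, mul_neg]
  simp only [← integral_const_mul (f _), ← mul_assoc]
  constructor
  · have hsum := hret.add hadv
    simp only [Pi.add_def, ← mul_add] at hsum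
    rw [← integral_prod _ hsum]
    simp only [mul_add]
    rw [integral_add hret hadv, hswap, add_neg_cancel]
  · have hdiff := hret.sub hadv
    simp only [Pi.sub_def, ← mul_sub] at hdiff
    rw [← integral_prod _ hret, ← integral_prod _ hdiff]
    simp only [mul_sub]
    rw [integral_sub hret hadv, hswap]
    ring
end

section
/- For all real Ω > 0 and τ₀ > 0, the Abel-regularized log–sine integral satisfies lim_{ε→0⁺} ∫₀^∞ e^{−ετ} log(τ/τ₀) sin(Ωτ) dτ = −(γ + log(Ω τ₀))/Ω, where γ is the Euler–Mascheroni constant and each integral on the left converges absolutely for every ε > 0. -/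
/-!
For `0 < re z`, the Laplace transform of the logarithm is
`∫₀^∞ e^{-zt} log t dt = -(γ + log z) / z` (`logLaplace_eq`). On the positive real axis this is the
derivative at `s = 1` of `∫₀^∞ t^{s-1} e^{-rt} dt = r^{-s} Γ(s)`, since `Γ'(1) = -γ`
(`logLaplace_ofReal`); it extends to the right half-plane by the identity theorem, the transform
being holomorphic there (`logLaplace_differentiableAt`).

Since `e^{-εt} sin (Ωt)` is the imaginary part of `e^{-zt}` for `z = ε - iΩ`, the regularized
integral equals `im (-(γ + log z + log τ₀) / z)` (`integral_log_sin_eq`). This is continuous in `ε`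
at `0`, because `-iΩ` lies off the branch cut of the logarithm, so the limit is its value at
`z = -iΩ`.
-/

open MeasureTheory Set Filter
open Topology

/-- Differentiation under the Mellin integral of `exp (-r t)`; it yields both the integrability of
logarithmic integrands and, at `s = 1`, the value of the logarithmic Laplace transform at `r`. -/
theorem mellin_log_exp {r : ℝ} (hr : 0 < r) {s : ℂ} (hs : 0 < s.re) :
    MellinConvergent (fun t : ℝ => Real.log t • Complex.exp (-(r * t))) s ∧
      HasDerivAt (mellin (fun t : ℝ => Complex.exp (-(r * t))))
        (mellin (fun t : ℝ => Real.log t • Complex.exp (-(r * t))) s) s := by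
  refine mellin_hasDerivAt_of_isBigO_rpow (a := s.re + 1) (b := 0) ?_ ?_ (lt_add_one _) ?_ hs
  · refine (Continuous.continuousOn ?_).locallyIntegrableOn measurableSet_Ioi
    fun_prop
  · rw [← Asymptotics.isBigO_norm_left]
    simpa [Complex.norm_exp] using (isLittleO_exp_neg_mul_rpow_atTop hr (-(s.re + 1))).isBigO
  · simp_rw [neg_zero, Real.rpow_zero]
    refine Asymptotics.isBigO_const_of_tendsto (?_ : Tendsto _ _ (𝓝 (1 : ℂ))) one_ne_zero
    have : Continuous fun t : ℝ => Complex.exp (-(r * t)) := by fun_prop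
    simpa using (this.tendsto 0).mono_left nhdsWithin_le_nhds

theorem integrable_log_exp {r : ℝ} (hr : 0 < r) (n : ℕ) :
    IntegrableOn (fun t : ℝ => t ^ n * (|Real.log t| * Real.exp (-(r * t)))) (Ioi 0) := by
  have h := (mellin_log_exp hr (s := n + 1) (by simp; positivity)).1
  refine IntegrableOn.congr_fun (Integrable.norm h) (fun t ht => ?_) measurableSet_Ioi
  have ht : 0 < t := ht
  simp [Complex.norm_exp, abs_of_pos ht]

/-- The Laplace transform `z ↦ ∫₀^∞ e^{-zt} log t dt`, meaningful for `0 < re z`. -/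
noncomputable def logLaplace (z : ℂ) : ℂ :=
  ∫ t in Ioi (0 : ℝ), Complex.exp (-(z * t)) * Real.log t

theorem logLaplace_integrable {z : ℂ} (hz : 0 < z.re) :
    IntegrableOn (fun t : ℝ => Complex.exp (-(z * t)) * Real.log t) (Ioi 0) := by
  refine (integrable_log_exp hz 0).mono' (by fun_prop) (ae_of_all _ fun t => ?_)
  simp [Complex.norm_exp, mul_comm]

/-- The value on the positive real axis, obtained by differentiating
`∫₀^∞ t^{s-1} e^{-rt} dt = (1/r)^s Γ(s)` at `s = 1`, where `Γ'(1) = -γ`. -/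
theorem logLaplace_ofReal {r : ℝ} (hr : 0 < r) :
    logLaplace r = -(Real.eulerMascheroniConstant + Complex.log r) / r := by
  have h := (mellin_log_exp hr (s := 1) (by simp)).2
  have hrne : (r : ℂ) ≠ 0 := by exact_mod_cast hr.ne'
  have h2 : HasDerivAt (fun s : ℂ => (1 / r : ℂ) ^ s * Complex.Gamma s)
      ((1 / r : ℂ) ^ (1 : ℂ) * Complex.log (1 / r) * Complex.Gamma 1 +
        (1 / r : ℂ) ^ (1 : ℂ) * (-Real.eulerMascheroniConstant)) 1 := by
    have := (hasDerivAt_id (1 : ℂ)).const_cpow (c := (1 / r : ℂ)) (Or.inl (by simp [hrne]))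
    simpa using this.fun_mul Complex.hasDerivAt_Gamma_one
  have h3 : mellin (fun t : ℝ => Complex.exp (-(r * t))) =ᶠ[𝓝 1]
      (fun s : ℂ => (1 / r : ℂ) ^ s * Complex.Gamma s) := by
    have : ∀ᶠ s : ℂ in 𝓝 1, 0 < s.re :=
      (isOpen_lt continuous_const Complex.continuous_re).mem_nhds (by simp)
    filter_upwards [this] with s hs
    simpa [mellin] using Complex.integral_cpow_mul_exp_neg_mul_Ioi hs hr
  have h4 := h.unique (h2.congr_of_eventuallyEq h3)
  have h5 : Complex.log (1 / r) = -Complex.log r := by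
    rw [one_div, Complex.log_inv]
    rw [Complex.arg_ofReal_of_nonneg hr.le]; exact Real.pi_pos.ne
  have h6 : logLaplace r = mellin (fun t : ℝ => Real.log t • Complex.exp (-(r * t))) 1 := by
    simp [mellin, logLaplace, mul_comm]
  rw [h6, h4, h5, Complex.cpow_one, Complex.Gamma_one]
  ring

theorem logLaplace_differentiableAt {z : ℂ} (hz : 0 < z.re) :
    DifferentiableAt ℂ logLaplace z := by
  -- On the half-plane `re z / 2 < re w` the `w`-derivative is dominated by its modulus on the
  -- boundary line.
  have hδ : 0 < z.re / 2 := by positivity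
  refine (hasDerivAt_integral_of_dominated_loc_of_deriv_le
    (μ := volume.restrict (Ioi (0 : ℝ)))
    (F := fun (z : ℂ) (t : ℝ) => Complex.exp (-(z * t)) * Real.log t)
    (F' := fun (z : ℂ) (t : ℝ) => Complex.exp (-(z * t)) * (-t) * Real.log t)
    (bound := fun t : ℝ => t ^ 1 * (|Real.log t| * Real.exp (-(z.re / 2 * t))))
    (s := {w : ℂ | z.re / 2 < w.re})
    ((isOpen_lt continuous_const Complex.continuous_re).mem_nhds (by simp; linarith))
    (Eventually.of_forall fun w => by fun_prop) (logLaplace_integrable hz) (by fun_prop)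
    ?_ (integrable_log_exp hδ 1) ?_).2.differentiableAt
  · filter_upwards [ae_restrict_mem measurableSet_Ioi] with t ht w hw
    have ht : 0 < t := ht
    have hw : z.re / 2 < w.re := hw
    simp only [norm_mul, Complex.norm_exp, norm_neg, Complex.norm_real, Real.norm_eq_abs,
      abs_of_pos ht, pow_one]
    have : Real.exp (-(w * t)).re ≤ Real.exp (-(z.re / 2 * t)) := by
      apply Real.exp_le_exp.2
      simp
      gcongr
    calc _ = t * (|Real.log t| * Real.exp (-(w * t)).re) := by ring
      _ ≤ _ := by gcongr
  · refine ae_of_all _ fun t w _ => ?_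
    have : HasDerivAt (fun w : ℂ => -(w * t)) (-t : ℂ) w := by
      simpa using ((hasDerivAt_id w).mul_const (t : ℂ)).fun_neg
    exact this.cexp.mul_const _

/-- The closed form on the right half-plane, by the identity theorem: both sides are holomorphic
there and agree on the positive reals, which accumulate at `1`. -/
theorem logLaplace_eq {z : ℂ} (hz : 0 < z.re) :
    logLaplace z = -(Real.eulerMascheroniConstant + Complex.log z) / z := by
  have hU : IsOpen {w : ℂ | 0 < w.re} := isOpen_lt continuous_const Complex.continuous_re
  refine AnalyticOnNhd.eqOn_of_preconnected_of_frequently_eq (U := {w : ℂ | 0 < w.re})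
    (f := logLaplace) (g := fun z => -(Real.eulerMascheroniConstant + Complex.log z) / z)
    (z₀ := 1) ?_ ?_ (convex_halfSpace_re_gt 0).isPreconnected (by simp) ?_ hz
  · exact DifferentiableOn.analyticOnNhd
      (fun w hw => (logLaplace_differentiableAt hw).differentiableWithinAt) hU
  · refine DifferentiableOn.analyticOnNhd (fun w hw => ?_) hU
    have hw : 0 < w.re := hw
    have hw0 : w ≠ 0 := by rintro rfl; simp at hw
    exact (DifferentiableAt.div (((Complex.differentiableAt_log (Or.inl hw)).const_add _).neg)
      differentiableAt_id hw0).differentiableWithinAt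
  · have hc : Tendsto (fun x : ℝ => (x : ℂ)) (𝓝[≠] 1) (𝓝[≠] 1) := by
      refine tendsto_nhdsWithin_iff.2 ⟨?_, ?_⟩
      · simpa using (Complex.continuous_ofReal.tendsto 1).mono_left nhdsWithin_le_nhds
      · filter_upwards [self_mem_nhdsWithin] with x hx
        simpa using hx
    refine hc.frequently (Eventually.frequently ?_)
    filter_upwards [nhdsWithin_le_nhds (lt_mem_nhds one_pos)] with x hx
    exact logLaplace_ofReal hx

/-- The regularized integral is the imaginary part of the Laplace transform of `log (t / τ₀)` at
`z = ε - iΩ`. -/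
theorem integral_log_sin_eq {Ω τ₀ ε : ℝ} (hτ₀ : 0 < τ₀) (hε : 0 < ε) :
    IntegrableOn (fun τ : ℝ => Real.exp (-ε * τ) * Real.log (τ / τ₀) * Real.sin (Ω * τ))
        (Ioi 0) volume ∧
    ∫ τ in Ioi (0 : ℝ), Real.exp (-ε * τ) * Real.log (τ / τ₀) * Real.sin (Ω * τ) =
      (-(Real.eulerMascheroniConstant + Complex.log (ε - Ω * Complex.I) + Real.log τ₀) /
        (ε - Ω * Complex.I)).im := by
  set z : ℂ := ε - Ω * Complex.I
  have hz : 0 < z.re := by simpa [z] using hε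
  have hz0 : z ≠ 0 := by intro h; simp [h] at hz
  have hneg : (-z).re < 0 := by simpa using hz
  have i1 := logLaplace_integrable hz
  have i2 : IntegrableOn (fun t : ℝ => Complex.exp (-(z * t))) (Ioi 0) := by
    simpa using integrableOn_exp_mul_complex_Ioi hneg 0
  have e2 : ∫ t in Ioi (0 : ℝ), Complex.exp (-(z * t)) = 1 / z := by
    simpa using integral_exp_mul_complex_Ioi hneg 0
  have i3 : IntegrableOn (fun t : ℝ => Complex.exp (-(z * t)) * Real.log t -
      Complex.exp (-(z * t)) * Real.log τ₀) (Ioi 0) := i1.sub (i2.mul_const (Real.log τ₀ : ℂ))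
  have hpt : ∀ t ∈ Ioi (0 : ℝ), Real.exp (-ε * t) * Real.log (t / τ₀) * Real.sin (Ω * t) =
      RCLike.im (Complex.exp (-(z * t)) * Real.log t - Complex.exp (-(z * t)) * Real.log τ₀) := by
    intro t ht
    have ht : 0 < t := ht
    rw [Real.log_div ht.ne' hτ₀.ne', ← mul_sub, ← Complex.ofReal_sub]
    simp only [RCLike.im_to_complex, Complex.im_mul_ofReal, Complex.exp_im]
    simp [z]
    ring
  refine ⟨IntegrableOn.congr_fun (Integrable.im i3) (fun t ht => (hpt t ht).symm) measurableSet_Ioi, ?_⟩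
  rw [setIntegral_congr_fun measurableSet_Ioi hpt, integral_im i3,
    integral_sub i1 (i2.mul_const _), integral_mul_const, e2]
  have := logLaplace_eq hz
  rw [logLaplace] at this
  rw [this, RCLike.im_to_complex]
  congr 1
  field_simp
  ring

/-- The Abel-regularized log–sine integral:
`lim_{ε→0⁺} ∫₀^∞ e^{-ετ} log(τ/τ₀) sin(Ωτ) dτ = -(γ + log(Ω τ₀))/Ω`, each integral
converging absolutely for every `ε > 0`. -/
theorem abel_regularized_log_sine_integral (Ω τ₀ : ℝ) (hΩ : 0 < Ω) (hτ₀ : 0 < τ₀) :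
    (∀ ε : ℝ, 0 < ε →
      IntegrableOn (fun τ : ℝ => Real.exp (-ε * τ) * Real.log (τ / τ₀) * Real.sin (Ω * τ))
        (Ioi 0) volume) ∧
    Tendsto
      (fun ε : ℝ =>
        ∫ τ in Ioi (0 : ℝ), Real.exp (-ε * τ) * Real.log (τ / τ₀) * Real.sin (Ω * τ))
      (nhdsWithin 0 (Ioi 0))
      (nhds (-(Real.eulerMascheroniConstant + Real.log (Ω * τ₀)) / Ω)) := by
  refine ⟨fun ε hε => (integral_log_sin_eq hτ₀ hε).1, ?_⟩
  have hΩne : (Ω : ℂ) ≠ 0 := by exact_mod_cast hΩ.ne'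
  have hcont : ContinuousAt (fun ε : ℝ =>
      (-(Real.eulerMascheroniConstant + Complex.log (ε - Ω * Complex.I) + Real.log τ₀) /
        (ε - Ω * Complex.I)).im) 0 := by
    have h1 : ContinuousAt (fun ε : ℝ => (ε - Ω * Complex.I : ℂ)) 0 := by fun_prop
    have h2 : ((0 : ℝ) - Ω * Complex.I : ℂ) ∈ Complex.slitPlane := Or.inr (by simp [hΩ.ne'])
    exact Complex.continuous_im.continuousAt.comp
      ((((h1.clog h2).const_add _).add_const _).neg.div h1 (by simp [hΩne]))
  -- The principal logarithm gives `log (-iΩ) = log Ω - iπ/2`; after division by `-iΩ` the `π/2` part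
  -- is real and drops out of the imaginary part.
  have hval : (-(Real.eulerMascheroniConstant + Complex.log ((0 : ℝ) - Ω * Complex.I) +
        Real.log τ₀) / ((0 : ℝ) - Ω * Complex.I)).im =
      -(Real.eulerMascheroniConstant + Real.log (Ω * τ₀)) / Ω := by
    have hlog : Complex.log ((0 : ℝ) - Ω * Complex.I) =
        Real.log Ω - (Real.pi / 2) * Complex.I := by
      rw [show ((0 : ℝ) - Ω * Complex.I : ℂ) = Ω * (-Complex.I) by simp,
        Complex.log_ofReal_mul hΩ (by simp), Complex.log_neg_I]
      ring
    have hdiv : -(Real.eulerMascheroniConstant + (Real.log Ω - (Real.pi / 2) * Complex.I) +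
        Real.log τ₀) / ((0 : ℝ) - Ω * Complex.I) =
        ((Real.pi / 2 / Ω * (-1) : ℝ) : ℂ) +
          ((-(Real.eulerMascheroniConstant + Real.log (Ω * τ₀)) / Ω : ℝ) : ℂ) * Complex.I := by
      rw [Real.log_mul hΩ.ne' hτ₀.ne']
      push_cast
      field_simp
      ring_nf
      simp [Complex.I_sq]
      ring
    rw [hlog, hdiv]
    simp only [Complex.add_im, Complex.ofReal_im, Complex.mul_I_im, Complex.ofReal_re, zero_add]
  have ht := hcont.tendsto.mono_left (nhdsWithin_le_nhds (s := Ioi 0))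
  rw [hval] at ht
  refine ht.congr' ?_
  filter_upwards [self_mem_nhdsWithin] with ε hε
  exact (integral_log_sin_eq hτ₀ hε).2.symm
end

section
/- Let A, φ ∈ ℝ, Ω > 0, τ₀ > 0, and define g(t) = A cos(Ω t + φ). Then for every t ∈ ℝ, lim_{ε→0⁺} ∫₀^∞ e^{−ετ} log(τ/τ₀) (g′(t−τ) − g′(t+τ)) dτ = −2 g(t) (log(Ω τ₀) + γ), where γ is the Euler–Mascheroni constant and each integral on the left converges absolutely for every ε > 0. -/
open MeasureTheory Set Filter

/-!
Since `g'(t-τ) - g'(t+τ) = 2 A Ω cos(Ω t + φ) sin(Ω τ)`, the regularized integral is, up to the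
factor `2 A Ω cos(Ω t + φ)`, the imaginary part of the Laplace transform of `log (τ/τ₀)` at
`z = ε - iΩ`. That transform is `-(γ + log z + log τ₀) / z` on the half-plane `0 < re z`
(`laplace_log`). For real `z` the formula comes from differentiating the Mellin transform
`∫ t^(s-1) e^(-rt) dt = r^(-s) Γ(s)` at `s = 1`, where `Γ'(1) = -γ`; it extends to complex `z` by
the identity theorem, both sides being holomorphic. The right-hand side is continuous at
`z = -iΩ`, where the principal logarithm is `log Ω - iπ/2`, and letting `ε → 0⁺` gives the claim.
-/

/-- The Mellin transform of `t ↦ exp (-z t)` may be differentiated under the integral sign. -/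
lemma mellin_exp_log {z s : ℂ} (hz : 0 < z.re) (hs : 0 < s.re) :
    MellinConvergent (fun t : ℝ => Real.log t • Complex.exp (-z * t)) s ∧
      HasDerivAt (mellin fun t : ℝ => Complex.exp (-z * t))
        (mellin (fun t : ℝ => Real.log t • Complex.exp (-z * t)) s) s := by
  refine mellin_hasDerivAt_of_isBigO_rpow (a := s.re + 1) (b := 0) ?_ ?_ (lt_add_one _) ?_ hs
  · refine (Continuous.continuousOn ?_).locallyIntegrableOn measurableSet_Ioi
    fun_prop
  · rw [← Asymptotics.isBigO_norm_left]
    simpa [Complex.norm_exp] using (isLittleO_exp_neg_mul_rpow_atTop hz (-(s.re + 1))).isBigO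
  · simp_rw [neg_zero, Real.rpow_zero]
    refine Asymptotics.isBigO_const_of_tendsto (y := (1 : ℂ)) ?_ one_ne_zero
    have h : Continuous fun t : ℝ => Complex.exp (-z * t) := by fun_prop
    simpa using (h.tendsto 0).mono_left nhdsWithin_le_nhds

lemma integrableOn_log_mul_exp {z : ℂ} (hz : 0 < z.re) :
    IntegrableOn (fun t : ℝ => (Real.log t : ℂ) * Complex.exp (-z * t)) (Ioi 0) := by
  simpa [MellinConvergent] using (mellin_exp_log (s := 1) hz (by simp)).1

lemma laplace_log_real {r : ℝ} (hr : 0 < r) :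
    ∫ t in Ioi (0 : ℝ), (Real.log t : ℂ) * Complex.exp (-(r : ℂ) * t) =
      -(Real.eulerMascheroniConstant + Complex.log r) / r := by
  have hrc : (r : ℂ) ≠ 0 := Complex.ofReal_ne_zero.mpr hr.ne'
  have h1 := (mellin_exp_log (z := (r : ℂ)) (s := 1) (by simpa using hr) (by simp)).2
  have h2 : HasDerivAt (fun s : ℂ => (1 / (r : ℂ)) ^ s * Complex.Gamma s) _ 1 :=
    ((hasDerivAt_id (1 : ℂ)).const_cpow (c := 1 / (r : ℂ))
      (Or.inl (one_div_ne_zero hrc))).mul Complex.hasDerivAt_Gamma_one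
  have h3 : (mellin fun t : ℝ => Complex.exp (-(r : ℂ) * t)) =ᶠ[nhds 1]
      (fun s : ℂ => (1 / (r : ℂ)) ^ s * Complex.Gamma s) := by
    have : {s : ℂ | 0 < s.re} ∈ nhds (1 : ℂ) :=
      (isOpen_lt continuous_const Complex.continuous_re).mem_nhds (by simp)
    filter_upwards [this] with s hs
    rw [← Complex.integral_cpow_mul_exp_neg_mul_Ioi hs hr]
    simp [mellin]
  have h4 := h1.unique (h2.congr_of_eventuallyEq h3)
  simp only [mellin, sub_self, Complex.cpow_zero, one_smul, Complex.real_smul, id,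
    Complex.cpow_one, Complex.Gamma_one, mul_one] at h4
  rw [h4, one_div, Complex.log_inv _ (by
    rw [Complex.arg_ofReal_of_nonneg hr.le]; exact Real.pi_pos.ne)]
  field_simp
  ring

lemma differentiableAt_laplace_log {z : ℂ} (hz : 0 < z.re) :
    DifferentiableAt ℂ
      (fun w : ℂ => ∫ t in Ioi (0 : ℝ), (Real.log t : ℂ) * Complex.exp (-w * t)) z := by
  have hδ : 0 < ((z.re / 2 : ℝ) : ℂ).re := by simpa using hz
  -- The Mellin integrand at `s = 2` is `t * log t * exp (-(re z / 2) t)`, which dominates the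
  -- `w`-derivative of the integrand uniformly on `re z / 2 < re w`.
  have hb := (mellin_exp_log (s := 2) hδ (by simp)).1.norm
  refine (hasDerivAt_integral_of_dominated_loc_of_deriv_le
    (μ := volume.restrict (Ioi 0))
    (F := fun (w : ℂ) (t : ℝ) => (Real.log t : ℂ) * Complex.exp (-w * t))
    (F' := fun w t => (Real.log t : ℂ) * (Complex.exp (-w * t) * (-t)))
    (s := {w : ℂ | z.re / 2 < w.re})
    ((isOpen_lt continuous_const Complex.continuous_re).mem_nhds (by
      show z.re / 2 < z.re
      linarith))
    ?_ (integrableOn_log_mul_exp hz) ?_ ?_ hb ?_).2.differentiableAt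
  · refine Eventually.of_forall fun w => Measurable.aestronglyMeasurable ?_
    fun_prop
  · refine Measurable.aestronglyMeasurable ?_
    fun_prop
  · filter_upwards [ae_restrict_mem measurableSet_Ioi] with t ht w hw
    have ht' : 0 < t := ht
    have hw' : z.re / 2 < w.re := hw
    have h21 : (2 : ℂ) - 1 = 1 := by norm_num
    simp only [h21, Complex.cpow_one, norm_smul, norm_mul, norm_neg, Complex.norm_real,
      Complex.norm_exp]
    have : Real.exp ((-w * t).re) ≤ Real.exp ((-((z.re / 2 : ℝ) : ℂ) * t).re) := by
      apply Real.exp_le_exp.mpr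
      simp only [neg_mul, Complex.neg_re, Complex.re_mul_ofReal, Complex.ofReal_re]
      nlinarith
    calc ‖Real.log t‖ * (Real.exp ((-w * t).re) * ‖t‖)
        ≤ ‖Real.log t‖ * (Real.exp ((-((z.re / 2 : ℝ) : ℂ) * t).re) * ‖t‖) := by gcongr
      _ = _ := by ring
  · refine Eventually.of_forall fun t w _ => ?_
    have h : HasDerivAt (fun w : ℂ => -w * (t : ℂ)) (-t) w := by
      simpa using ((hasDerivAt_id w).neg.mul_const (t : ℂ))
    exact h.cexp.const_mul _

lemma laplace_log {z : ℂ} (hz : 0 < z.re) :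
    ∫ t in Ioi (0 : ℝ), (Real.log t : ℂ) * Complex.exp (-z * t) =
      -(Real.eulerMascheroniConstant + Complex.log z) / z := by
  let U : Set ℂ := {w : ℂ | 0 < w.re}
  have hU : IsOpen U := isOpen_lt continuous_const Complex.continuous_re
  have hf : AnalyticOnNhd ℂ
      (fun w : ℂ => ∫ t in Ioi (0 : ℝ), (Real.log t : ℂ) * Complex.exp (-w * t)) U :=
    DifferentiableOn.analyticOnNhd
      (fun w hw => (differentiableAt_laplace_log hw).differentiableWithinAt) hU
  have hg : AnalyticOnNhd ℂ
      (fun w : ℂ => -(Real.eulerMascheroniConstant + Complex.log w) / w) U := by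
    refine DifferentiableOn.analyticOnNhd (fun w hw => ?_) hU
    have hw' : 0 < w.re := hw
    have hw0 : w ≠ 0 := fun h => by simp [h] at hw'
    exact (((differentiableAt_const _).add
      (Complex.differentiableAt_log (Or.inl hw'))).neg.div differentiableAt_id
        hw0).differentiableWithinAt
  have hconn : IsPreconnected U := (convex_halfSpace_re_gt 0).isPreconnected
  refine hf.eqOn_of_preconnected_of_frequently_eq hg hconn (z₀ := 1)
    (show (0 : ℝ) < (1 : ℂ).re by simp) ?_ hz
  -- The two sides agree at the real points `1 + x`, `x > 0`, which accumulate at `1`.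
  have ht : Tendsto (fun x : ℝ => ((1 + x : ℝ) : ℂ)) (nhdsWithin 0 (Ioi 0))
      (nhdsWithin 1 {1}ᶜ) := by
    refine tendsto_nhdsWithin_iff.mpr ⟨?_, ?_⟩
    · have h : Continuous fun x : ℝ => ((1 + x : ℝ) : ℂ) := by fun_prop
      simpa using (h.tendsto 0).mono_left nhdsWithin_le_nhds
    · filter_upwards [self_mem_nhdsWithin] with x hx
      have hx' : x ≠ 0 := ne_of_gt hx
      simpa using hx'
  refine ht.frequently (Eventually.frequently ?_)
  filter_upwards [self_mem_nhdsWithin] with x hx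
  have hx' : 0 < x := hx
  exact laplace_log_real (by linarith)

lemma laplace_log_div {z : ℂ} (hz : 0 < z.re) (c : ℝ) :
    IntegrableOn (fun t : ℝ => ((Real.log t : ℂ) - c) * Complex.exp (-z * t)) (Ioi 0) ∧
    ∫ t in Ioi (0 : ℝ), ((Real.log t : ℂ) - c) * Complex.exp (-z * t) =
      -(Real.eulerMascheroniConstant + Complex.log z + c) / z := by
  have hz' : (-z).re < 0 := by simpa using hz
  have hz0 : z ≠ 0 := fun h => by simp [h] at hz
  have i1 := integrableOn_log_mul_exp hz
  have i2 := (integrableOn_exp_mul_complex_Ioi hz' 0).const_mul (c : ℂ)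
  simp_rw [sub_mul]
  refine ⟨i1.sub i2, ?_⟩
  rw [integral_sub i1 i2, laplace_log hz, integral_const_mul, integral_exp_mul_complex_Ioi hz']
  simp only [Complex.ofReal_zero, mul_zero, Complex.exp_zero]
  field_simp
  ring

/-- The integrand is the imaginary part of that of a complex Laplace transform. -/
lemma tail_integrand_eq (A φ Ω τ₀ t ε τ : ℝ) (hτ₀ : 0 < τ₀) (hτ : 0 < τ) :
    Real.exp (-ε * τ) * Real.log (τ / τ₀) *
      (deriv (fun s : ℝ => A * Real.cos (Ω * s + φ)) (t - τ) -
        deriv (fun s : ℝ => A * Real.cos (Ω * s + φ)) (t + τ)) =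
    2 * A * Ω * Real.cos (Ω * t + φ) *
      (((Real.log τ : ℂ) - (Real.log τ₀ : ℝ)) *
        Complex.exp (-((ε : ℂ) - Ω * Complex.I) * τ)).im := by
  have hd : ∀ x : ℝ, deriv (fun s : ℝ => A * Real.cos (Ω * s + φ)) x =
      -(A * Ω * Real.sin (Ω * x + φ)) := by
    intro x
    have h1 : HasDerivAt (fun s : ℝ => Ω * s + φ) Ω x := by
      simpa using ((hasDerivAt_id x).const_mul Ω).add_const φ
    rw [(h1.cos.const_mul A).deriv]
    ring
  rw [hd, hd, Real.log_div hτ.ne' hτ₀.ne', ← Complex.ofReal_sub, Complex.im_ofReal_mul,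
    Complex.exp_im]
  have e1 : (-((ε : ℂ) - Ω * Complex.I) * τ).re = -ε * τ := by simp
  have e2 : (-((ε : ℂ) - Ω * Complex.I) * τ).im = Ω * τ := by simp
  have e3 : Ω * (t - τ) + φ = (Ω * t + φ) - Ω * τ := by ring
  have e4 : Ω * (t + τ) + φ = (Ω * t + φ) + Ω * τ := by ring
  rw [e1, e2, e3, e4, Real.sin_sub, Real.sin_add (Ω * t + φ)]
  ring

/-- Evaluation of the Hadamard partie-finie tail kernel on a sinusoid
`g(t) = A cos(Ω t + φ)`: the Abel-regularized value of
`∫₀^∞ log(τ/τ₀) (g'(t-τ) - g'(t+τ)) dτ` is `-2 g(t) (log(Ω τ₀) + γ)`. -/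
theorem tail_kernel_on_sinusoid (A φ Ω τ₀ : ℝ) (hΩ : 0 < Ω) (hτ₀ : 0 < τ₀) :
    ∀ t : ℝ,
      (∀ ε : ℝ, 0 < ε →
        IntegrableOn
          (fun τ : ℝ => Real.exp (-ε * τ) * Real.log (τ / τ₀) *
            (deriv (fun s : ℝ => A * Real.cos (Ω * s + φ)) (t - τ) -
             deriv (fun s : ℝ => A * Real.cos (Ω * s + φ)) (t + τ)))
          (Ioi 0) volume) ∧
      Tendsto
        (fun ε : ℝ =>
          ∫ τ in Ioi (0 : ℝ), Real.exp (-ε * τ) * Real.log (τ / τ₀) *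
            (deriv (fun s : ℝ => A * Real.cos (Ω * s + φ)) (t - τ) -
             deriv (fun s : ℝ => A * Real.cos (Ω * s + φ)) (t + τ)))
        (nhdsWithin 0 (Ioi 0))
        (nhds (-2 * (A * Real.cos (Ω * t + φ)) *
          (Real.log (Ω * τ₀) + Real.eulerMascheroniConstant))) := by
  intro t
  have hre : ∀ ε : ℝ, 0 < ε → 0 < ((ε : ℂ) - Ω * Complex.I).re := by
    intro ε hε
    simpa using hε
  constructor
  · intro ε hε
    have h := (laplace_log_div (hre ε hε) (Real.log τ₀)).1.im.const_mul
      (2 * A * Ω * Real.cos (Ω * t + φ))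
    exact IntegrableOn.congr_fun h
      (fun τ hτ => (tail_integrand_eq A φ Ω τ₀ t ε τ hτ₀ hτ).symm) measurableSet_Ioi
  · let G : ℂ → ℂ := fun z =>
      -(Real.eulerMascheroniConstant + Complex.log z + (Real.log τ₀ : ℝ)) / z
    have hval : (fun ε : ℝ => 2 * A * Ω * Real.cos (Ω * t + φ) *
        (G ((ε : ℂ) - Ω * Complex.I)).im) =ᶠ[nhdsWithin 0 (Ioi 0)]
        (fun ε : ℝ =>
          ∫ τ in Ioi (0 : ℝ), Real.exp (-ε * τ) * Real.log (τ / τ₀) *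
            (deriv (fun s : ℝ => A * Real.cos (Ω * s + φ)) (t - τ) -
             deriv (fun s : ℝ => A * Real.cos (Ω * s + φ)) (t + τ))) := by
      filter_upwards [self_mem_nhdsWithin] with ε hε
      obtain ⟨h1, h2⟩ := laplace_log_div (hre ε hε) (Real.log τ₀)
      rw [setIntegral_congr_fun measurableSet_Ioi
        (fun τ hτ => tail_integrand_eq A φ Ω τ₀ t ε τ hτ₀ hτ), integral_const_mul]
      congr 1
      exact (congrArg Complex.im h2.symm).trans (integral_im h1).symm
    refine Tendsto.congr' hval ?_
    have hΩc : (Ω : ℂ) ≠ 0 := Complex.ofReal_ne_zero.mpr hΩ.ne'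
    have hne : ((0 : ℝ) : ℂ) - Ω * Complex.I ≠ 0 := by
      simpa using hΩ.ne'
    have hslit : ((0 : ℝ) : ℂ) - Ω * Complex.I ∈ Complex.slitPlane :=
      Or.inr (by simpa using hΩ.ne')
    have hcont : ContinuousAt (fun ε : ℝ => 2 * A * Ω * Real.cos (Ω * t + φ) *
        (G ((ε : ℂ) - Ω * Complex.I)).im) 0 := by
      have hin : ContinuousAt (fun ε : ℝ => (ε : ℂ) - Ω * Complex.I) 0 := by fun_prop
      have hG : ContinuousAt G (((0 : ℝ) : ℂ) - Ω * Complex.I) :=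
        (((continuousAt_const.add (continuousAt_clog hslit)).add
          continuousAt_const).neg).div continuousAt_id hne
      have hcomp : ContinuousAt (fun ε : ℝ => G ((ε : ℂ) - Ω * Complex.I)) 0 :=
        ContinuousAt.comp (f := fun ε : ℝ => (ε : ℂ) - Ω * Complex.I) hG hin
      exact continuousAt_const.mul (Complex.continuous_im.continuousAt.comp hcomp)
    have hlim := hcont.tendsto.mono_left (nhdsWithin_le_nhds (s := Ioi 0))
    have hlog : Complex.log (((0 : ℝ) : ℂ) - Ω * Complex.I) =
        (Real.log Ω : ℂ) + (-(Real.pi / 2) : ℝ) * Complex.I := by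
      have : ((0 : ℝ) : ℂ) - Ω * Complex.I = (Ω : ℂ) * (-Complex.I) := by
        push_cast
        ring
      rw [this, Complex.log_ofReal_mul hΩ (by simp), Complex.log_neg_I]
      push_cast
      ring
    have hGval : G (((0 : ℝ) : ℂ) - Ω * Complex.I) =
        ((-(Real.pi / 2) / Ω : ℝ) : ℂ) +
          ((-(Real.eulerMascheroniConstant + Real.log Ω + Real.log τ₀) / Ω : ℝ) : ℂ) *
            Complex.I := by
      simp only [G]
      rw [hlog, div_eq_iff hne]
      push_cast
      field_simp
      ring_nf
      simp only [Complex.I_sq]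
      ring
    convert hlim using 2
    rw [hGval, Real.log_mul hΩ.ne' hτ₀.ne']
    simp only [Complex.add_im, Complex.ofReal_im, Complex.im_ofReal_mul, Complex.I_im]
    field_simp
    ring
end

section
/- Let y₁, y₂ ∈ ℝ³ and, for x ∈ ℝ³, set r₁ = ‖x − y₁‖, r₂ = ‖x − y₂‖, r₁₂ = ‖y₁ − y₂‖ (Euclidean norms). Then for every x with x ≠ y₁ and x ≠ y₂, the function g(x) = log(r₁ + r₂ + r₁₂) satisfies Δg(x) = 1/(r₁ r₂), where Δ is the Euclidean Laplacian on ℝ³. -/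
/-!
Write `a = x - y₁`, `b = x - y₂`, `d = ‖y₁ - y₂‖` and `S = ‖a‖ + ‖b‖ + d`. Since the gradient of
`‖x - y‖` is `(x - y) / ‖x - y‖`, differentiating `log S` twice in each coordinate direction and
summing gives

  `Δ log S = (2 / ‖a‖ + 2 / ‖b‖) / S - (2 + 2 ⟪a, b⟫ / (‖a‖ ‖b‖)) / S ^ 2`.

By polarization `2 ⟪a, b⟫ = ‖a‖² + ‖b‖² - d²`, so the second numerator equals
`((‖a‖ + ‖b‖)² - d²) / (‖a‖ ‖b‖) = S (‖a‖ + ‖b‖ - d) / (‖a‖ ‖b‖)`, and the whole expression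
collapses to `1 / (‖a‖ ‖b‖)`.
-/

open MeasureTheory

/-- The Euclidean Laplacian of `f : ℝ³ → ℝ`, as the sum of the second partial
derivatives along the standard coordinate directions. -/
noncomputable def laplacian (f : EuclideanSpace ℝ (Fin 3) → ℝ)
    (x : EuclideanSpace ℝ (Fin 3)) : ℝ :=
  ∑ i : Fin 3,
    fderiv ℝ (fun y => fderiv ℝ f y (EuclideanSpace.single i 1)) x
      (EuclideanSpace.single i 1)

lemma hasFDerivAt_norm_sub {x y : EuclideanSpace ℝ (Fin 3)} (h : x ≠ y) :
    HasFDerivAt (fun z => ‖z - y‖) (‖x - y‖⁻¹ • innerSL ℝ (x - y)) x := by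
  have h0 : ‖x - y‖ ≠ 0 := norm_ne_zero_iff.mpr (sub_ne_zero.mpr h)
  have h1 := (((hasFDerivAt_id x).sub_const y).norm_sq).sqrt (pow_ne_zero 2 h0)
  simp only [id, Real.sqrt_sq (norm_nonneg _)] at h1
  refine h1.congr_fderiv ?_
  ext v
  simp
  field_simp

lemma hasFDerivAt_coord_sub (x y : EuclideanSpace ℝ (Fin 3)) (i : Fin 3) :
    HasFDerivAt (fun z : EuclideanSpace ℝ (Fin 3) => z i - y i)
      (EuclideanSpace.proj i : EuclideanSpace ℝ (Fin 3) →L[ℝ] ℝ) x :=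
  (EuclideanSpace.proj i : EuclideanSpace ℝ (Fin 3) →L[ℝ] ℝ).hasFDerivAt.sub_const (y i)

lemma fock_sum_pos {x y₁ : EuclideanSpace ℝ (Fin 3)} (y₂ : EuclideanSpace ℝ (Fin 3))
    (h₁ : x ≠ y₁) : 0 < ‖x - y₁‖ + ‖x - y₂‖ + ‖y₁ - y₂‖ := by
  have := norm_pos_iff.mpr (sub_ne_zero.mpr h₁)
  positivity

lemma fock_partial {x y₁ y₂ : EuclideanSpace ℝ (Fin 3)} (h₁ : x ≠ y₁) (h₂ : x ≠ y₂)
    (i : Fin 3) :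
    fderiv ℝ (fun z => Real.log (‖z - y₁‖ + ‖z - y₂‖ + ‖y₁ - y₂‖)) x
      (EuclideanSpace.single i 1) =
    ((x i - y₁ i) * ‖x - y₁‖⁻¹ + (x i - y₂ i) * ‖x - y₂‖⁻¹) *
      (‖x - y₁‖ + ‖x - y₂‖ + ‖y₁ - y₂‖)⁻¹ := by
  have h := (((hasFDerivAt_norm_sub h₁).add (hasFDerivAt_norm_sub h₂)).add_const
    ‖y₁ - y₂‖).log (fock_sum_pos y₂ h₁).ne'
  have h' := h.fderiv
  simp only [Pi.add_apply] at h'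
  rw [h']
  simp [EuclideanSpace.inner_single_right]
  ring

lemma fock_partial_partial {x y₁ y₂ : EuclideanSpace ℝ (Fin 3)} (h₁ : x ≠ y₁) (h₂ : x ≠ y₂)
    (i : Fin 3) :
    fderiv ℝ (fun y => fderiv ℝ (fun z => Real.log (‖z - y₁‖ + ‖z - y₂‖ + ‖y₁ - y₂‖)) y
      (EuclideanSpace.single i 1)) x (EuclideanSpace.single i 1) =
    (‖x - y₁‖⁻¹ - (x i - y₁ i) ^ 2 * ‖x - y₁‖⁻¹ ^ 3
        + (‖x - y₂‖⁻¹ - (x i - y₂ i) ^ 2 * ‖x - y₂‖⁻¹ ^ 3)) *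
      (‖x - y₁‖ + ‖x - y₂‖ + ‖y₁ - y₂‖)⁻¹ -
    ((x i - y₁ i) * ‖x - y₁‖⁻¹ + (x i - y₂ i) * ‖x - y₂‖⁻¹) ^ 2 *
      (‖x - y₁‖ + ‖x - y₂‖ + ‖y₁ - y₂‖)⁻¹ ^ 2 := by
  -- The closed form of the first partial holds on a neighbourhood of `x`, so it may be
  -- differentiated in place of the original function.
  have hev : (fun y => fderiv ℝ (fun z => Real.log (‖z - y₁‖ + ‖z - y₂‖ + ‖y₁ - y₂‖)) y
      (EuclideanSpace.single i 1)) =ᶠ[nhds x] fun z =>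
      ((z i - y₁ i) * ‖z - y₁‖⁻¹ + (z i - y₂ i) * ‖z - y₂‖⁻¹) *
      (‖z - y₁‖ + ‖z - y₂‖ + ‖y₁ - y₂‖)⁻¹ := by
    filter_upwards [isOpen_ne.mem_nhds h₁, isOpen_ne.mem_nhds h₂] with z hz₁ hz₂
    exact fock_partial hz₁ hz₂ i
  rw [hev.fderiv_eq]
  have n₁ : ‖x - y₁‖ ≠ 0 := norm_ne_zero_iff.mpr (sub_ne_zero.mpr h₁)
  have n₂ : ‖x - y₂‖ ≠ 0 := norm_ne_zero_iff.mpr (sub_ne_zero.mpr h₂)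
  have d₁ := hasFDerivAt_norm_sub h₁
  have d₂ := hasFDerivAt_norm_sub h₂
  have i₁ := (hasDerivAt_inv n₁).comp_hasFDerivAt x d₁
  have i₂ := (hasDerivAt_inv n₂).comp_hasFDerivAt x d₂
  have i₃ := (hasDerivAt_inv (fock_sum_pos y₂ h₁).ne').comp_hasFDerivAt x
    ((d₁.add d₂).add_const ‖y₁ - y₂‖)
  have h := (((hasFDerivAt_coord_sub x y₁ i).mul i₁).add
    ((hasFDerivAt_coord_sub x y₂ i).mul i₂)).mul i₃
  have h' := congrArg (fun L => L (EuclideanSpace.single i 1)) h.fderiv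
  refine h'.trans ?_
  simp [EuclideanSpace.inner_single_right]
  ring

/-- Fock's elementary kernel `g = log(r₁ + r₂ + r₁₂)` solves `Δg = 1/(r₁ r₂)` away from
the two singular points. -/
theorem laplacian_fock_kernel (y₁ y₂ : EuclideanSpace ℝ (Fin 3)) :
    ∀ x : EuclideanSpace ℝ (Fin 3), x ≠ y₁ → x ≠ y₂ →
      laplacian (fun z => Real.log (‖z - y₁‖ + ‖z - y₂‖ + ‖y₁ - y₂‖)) x =
        1 / (‖x - y₁‖ * ‖x - y₂‖) := by
  intro x h₁ h₂
  simp only [laplacian, fock_partial_partial h₁ h₂]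
  have n₁ : ‖x - y₁‖ ≠ 0 := norm_ne_zero_iff.mpr (sub_ne_zero.mpr h₁)
  have n₂ : ‖x - y₂‖ ≠ 0 := norm_ne_zero_iff.mpr (sub_ne_zero.mpr h₂)
  have hS := (fock_sum_pos y₂ h₁).ne'
  have e₁ := EuclideanSpace.real_norm_sq_eq (x - y₁)
  have e₂ := EuclideanSpace.real_norm_sq_eq (x - y₂)
  have e₃ := EuclideanSpace.real_norm_sq_eq (y₁ - y₂)
  simp only [Fin.sum_univ_three, PiLp.sub_apply] at e₁ e₂ e₃ ⊢
  generalize ‖x - y₁‖ = r at *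
  generalize ‖x - y₂‖ = s at *
  generalize ‖y₁ - y₂‖ = d at *
  obtain ⟨a, ha⟩ : ∃ a : Fin 3 → ℝ, ∀ i, x i - y₁ i = a i := ⟨_, fun _ => rfl⟩
  obtain ⟨b, hb⟩ : ∃ b : Fin 3 → ℝ, ∀ i, x i - y₂ i = b i := ⟨_, fun _ => rfl⟩
  have hab : ∀ i, y₁ i - y₂ i = b i - a i := fun i => by rw [← ha, ← hb]; ring
  simp only [ha, hb, hab] at *
  -- Polarization: `2 ⟪a, b⟫ = r² + s² - d²`.
  have hdot : 2 * (a 0 * b 0 + a 1 * b 1 + a 2 * b 2) = r ^ 2 + s ^ 2 - d ^ 2 := by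
    rw [e₁, e₂, e₃]; ring
  trans (3 * r⁻¹ - (a 0 ^ 2 + a 1 ^ 2 + a 2 ^ 2) * r⁻¹ ^ 3
      + (3 * s⁻¹ - (b 0 ^ 2 + b 1 ^ 2 + b 2 ^ 2) * s⁻¹ ^ 3)) * (r + s + d)⁻¹
    - ((a 0 ^ 2 + a 1 ^ 2 + a 2 ^ 2) * r⁻¹ ^ 2 + (b 0 ^ 2 + b 1 ^ 2 + b 2 ^ 2) * s⁻¹ ^ 2
      + 2 * (a 0 * b 0 + a 1 * b 1 + a 2 * b 2) * (r⁻¹ * s⁻¹)) * (r + s + d)⁻¹ ^ 2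
  · ring
  · rw [hdot, ← e₁, ← e₂]
    field_simp
    ring
end
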